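/- arXiv:2301.13354 — 3 statements merged into one kernel-verified Lean document; each statement's English description precedes it below -/
import Mathlib

section
/- Let ν₁ and ν₂ be finite Borel measures on [0,1]^d and define the cumulative-distribution-type function Q̃(x) = ν₁({u ∈ [0,1]^d : u ≤ x}) − ν₂({u ∈ [0,1]^d : u ≤ x}) for x ∈ [0,1]^d. Then for every integer k ≥ 1 and every x ∈ [0,1]^d, the k-fold primitive satisfies μ^k(Q̃)(x) = ∫ ∏_{j=1}^d ((x_j − u_j)^k / k!)·1[u_j ≤ x_j] dν₁(u) − ∫ ∏_{j=1}^d ((x_j − u_j)^k / k!)·1[u_j ≤ x_j] dν₂(u); that is, the k-fold primitive of a difference of cumulative distribution functions is the corresponding mixture of k-th order splines against the underlying measures. -/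
/-!
The identity is proved by induction on the order, starting from order `0`, where the spline
`splineKer d 0 x u` is the indicator of `u ≤ x` and the claim is the definition of `Q`.
In the inductive step the primitive of `y ↦ ∫ u, splineKer d k y u ∂ν` is computed by Fubini
(`primOp_mixture`): the kernel is bounded by `1` on the unit cube (`abs_splineKer_le_one`), hence
integrable for the product of the finite measures involved. The inner integral factorises over
coordinates, and `∫ t in [0, a], (t - b)^k / k! * 1[b ≤ t]` is the one-dimensional spline of order
`k + 1` (`integral_spline_one`), the knot `b` being nonnegative.
-/

open MeasureTheory

/-- The primitive operator `μ(f)(x) = ∫_{B_x} f dλ`, where `B_x = ∏_j [0, x_j]`. -/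
noncomputable def primOp (d : ℕ) (f : (Fin d → ℝ) → ℝ) : (Fin d → ℝ) → ℝ := fun x =>
  ∫ y in Set.Icc (0 : Fin d → ℝ) x, f y

/-- The spline `φ_u^k(x)` of order `k` with knot `u`, as a kernel in `x` and `u`. -/
noncomputable def splineKer (d k : ℕ) (x u : Fin d → ℝ) : ℝ :=
  ∏ j, ((x j - u j) ^ k / (Nat.factorial k : ℝ)) * (if u j ≤ x j then (1 : ℝ) else 0)

lemma integral_spline_one (k : ℕ) (a b : ℝ) (hb : 0 ≤ b) :
    ∫ t in Set.Icc (0 : ℝ) a, ((t - b) ^ k / (Nat.factorial k : ℝ)) * (if b ≤ t then (1 : ℝ) else 0)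
      = ((a - b) ^ (k + 1) / (Nat.factorial (k + 1) : ℝ)) * (if b ≤ a then (1 : ℝ) else 0) := by
  have h1 : ∀ t : ℝ, ((t - b) ^ k / (Nat.factorial k : ℝ)) * (if b ≤ t then (1 : ℝ) else 0)
      = (Set.Ici b).indicator (fun t => (t - b) ^ k / (Nat.factorial k : ℝ)) t := by
    intro t
    simp [Set.indicator_apply]
  have h2 : Set.Icc 0 a ∩ Set.Ici b = Set.Icc b a := by
    ext t
    simp only [Set.mem_inter_iff, Set.mem_Icc, Set.mem_Ici]
    constructor
    · rintro ⟨⟨_, h⟩, h'⟩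
      exact ⟨h', h⟩
    · rintro ⟨h, h'⟩
      exact ⟨⟨hb.trans h, h'⟩, h⟩
  simp_rw [h1]
  rw [setIntegral_indicator measurableSet_Ici, h2]
  by_cases hab : b ≤ a
  · rw [integral_Icc_eq_integral_Ioc, ← intervalIntegral.integral_of_le hab,
      intervalIntegral.integral_div,
      intervalIntegral.integral_comp_sub_right (fun t => t ^ k) b, integral_pow, if_pos hab,
      Nat.factorial_succ]
    have : (Nat.factorial k : ℝ) ≠ 0 := by positivity
    have : (k : ℝ) + 1 ≠ 0 := by positivity
    push_cast
    field_simp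
    simp
  · rw [Set.Icc_eq_empty hab, if_neg hab]
    simp

lemma integral_splineKer (d k : ℕ) (x u : Fin d → ℝ) (hu : 0 ≤ u) :
    ∫ y in Set.Icc (0 : Fin d → ℝ) x, splineKer d k y u = splineKer d (k + 1) x u := by
  unfold splineKer
  rw [← Set.pi_univ_Icc, volume_pi, Measure.restrict_pi_pi,
    integral_fintype_prod_eq_prod (𝕜 := ℝ)
      (fun j t => ((t - u j) ^ k / (Nat.factorial k : ℝ)) * (if u j ≤ t then (1 : ℝ) else 0))]
  exact Finset.prod_congr rfl fun j _ => integral_spline_one k (x j) (u j) (hu j)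

lemma measurable_splineKer (d k : ℕ) :
    Measurable (fun p : (Fin d → ℝ) × (Fin d → ℝ) => splineKer d k p.1 p.2) := by
  unfold splineKer
  refine Finset.measurable_prod _ fun j _ => ?_
  have h1 : Measurable fun p : (Fin d → ℝ) × (Fin d → ℝ) => p.1 j :=
    (measurable_pi_apply j).comp measurable_fst
  have h2 : Measurable fun p : (Fin d → ℝ) × (Fin d → ℝ) => p.2 j :=
    (measurable_pi_apply j).comp measurable_snd
  exact (((h1.sub h2).pow_const k).div_const _).mul
    (Measurable.ite (measurableSet_le h2 h1) measurable_const measurable_const)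

lemma abs_splineKer_le_one (d k : ℕ) (x u : Fin d → ℝ) (hx : x ∈ Set.Icc (0 : Fin d → ℝ) 1)
    (hu : u ∈ Set.Icc (0 : Fin d → ℝ) 1) : ‖splineKer d k x u‖ ≤ 1 := by
  unfold splineKer
  rw [norm_prod]
  refine Finset.prod_le_one (fun _ _ => norm_nonneg _) fun j _ => ?_
  have hx0 := hx.1 j
  have hx1 := hx.2 j
  have hu0 := hu.1 j
  have hu1 := hu.2 j
  simp only [Pi.zero_apply, Pi.one_apply] at hx0 hx1 hu0 hu1
  have hab : |x j - u j| ≤ 1 := abs_le.2 ⟨by linarith, by linarith⟩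
  have hf : (1 : ℝ) ≤ (Nat.factorial k : ℝ) := by exact_mod_cast Nat.factorial_pos k
  have h1 : ‖(x j - u j) ^ k / (Nat.factorial k : ℝ)‖ ≤ 1 := by
    rw [norm_div, norm_pow, Real.norm_eq_abs, Real.norm_of_nonneg (by positivity)]
    exact div_le_one_of_le₀ ((pow_le_one₀ (abs_nonneg _) hab).trans hf) (by positivity)
  split_ifs
  · simpa using h1
  · simp

lemma integrable_splineKer (d k : ℕ) (ν : Measure (Fin d → ℝ)) [IsFiniteMeasure ν]
    (hν : ν ((Set.Icc (0 : Fin d → ℝ) 1)ᶜ) = 0)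
    (x : Fin d → ℝ) (hx : x ∈ Set.Icc (0 : Fin d → ℝ) 1) :
    Integrable (fun p : (Fin d → ℝ) × (Fin d → ℝ) => splineKer d k p.1 p.2)
      ((volume.restrict (Set.Icc 0 x)).prod ν) := by
  have hres : ν.restrict (Set.Icc 0 1) = ν := Measure.restrict_eq_self_of_ae_mem hν
  have : IsFiniteMeasure ((volume : Measure (Fin d → ℝ)).restrict (Set.Icc 0 x)) :=
    ⟨by simpa using (isCompact_Icc (a := (0 : Fin d → ℝ)) (b := x)).measure_lt_top⟩
  refine Integrable.of_bound (measurable_splineKer d k).aestronglyMeasurable 1 ?_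
  rw [← hres, Measure.prod_restrict]
  filter_upwards [ae_restrict_mem (measurableSet_Icc.prod measurableSet_Icc)] with p hp
  exact abs_splineKer_le_one d k _ _ ⟨hp.1.1, hp.1.2.trans hx.2⟩ hp.2

/-- A mixture of splines of order `k` has the same mixture of order `k + 1` as its primitive. -/
lemma primOp_mixture (d k : ℕ) (ν : Measure (Fin d → ℝ)) [IsFiniteMeasure ν]
    (hν : ν ((Set.Icc (0 : Fin d → ℝ) 1)ᶜ) = 0)
    (x : Fin d → ℝ) (hx : x ∈ Set.Icc (0 : Fin d → ℝ) 1) :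
    ∫ y in Set.Icc (0 : Fin d → ℝ) x, ∫ u, splineKer d k y u ∂ν
      = ∫ u, splineKer d (k + 1) x u ∂ν := by
  rw [integral_integral_swap (integrable_splineKer d k ν hν x hx)]
  have hae : ∀ᵐ u ∂ν, u ∈ Set.Icc (0 : Fin d → ℝ) 1 := hν
  refine integral_congr_ae ?_
  filter_upwards [hae] with u hu
  exact integral_splineKer d k x u hu.1

lemma cdf_eq_mixture (d : ℕ) (ν : Measure (Fin d → ℝ))
    (hν : ν ((Set.Icc (0 : Fin d → ℝ) 1)ᶜ) = 0) (x : Fin d → ℝ) :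
    (ν (Set.Icc (0 : Fin d → ℝ) 1 ∩ Set.Iic x)).toReal = ∫ u, splineKer d 0 x u ∂ν := by
  have hres : ν.restrict (Set.Icc 0 1) = ν := Measure.restrict_eq_self_of_ae_mem hν
  have h : ∀ u, splineKer d 0 x u = (Set.Iic x).indicator 1 u := by
    intro u
    classical
    rw [Set.indicator_apply]
    simp [splineKer, Pi.le_def, Finset.prod_ite_zero]
  simp_rw [h]
  rw [integral_indicator_one measurableSet_Iic, Measure.real, ← hres,
    Measure.restrict_apply measurableSet_Iic, hres, Set.inter_comm]

theorem stmt_1 (d k : ℕ) (hk : 1 ≤ k)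
    (ν₁ ν₂ : Measure (Fin d → ℝ)) [IsFiniteMeasure ν₁] [IsFiniteMeasure ν₂]
    (hν₁ : ν₁ ((Set.Icc (0 : Fin d → ℝ) 1)ᶜ) = 0)
    (hν₂ : ν₂ ((Set.Icc (0 : Fin d → ℝ) 1)ᶜ) = 0)
    (Q : (Fin d → ℝ) → ℝ)
    (hQ : ∀ z ∈ Set.Icc (0 : Fin d → ℝ) 1,
      Q z = (ν₁ (Set.Icc (0 : Fin d → ℝ) 1 ∩ Set.Iic z)).toReal
          - (ν₂ (Set.Icc (0 : Fin d → ℝ) 1 ∩ Set.Iic z)).toReal)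
    (x : Fin d → ℝ) (hx : x ∈ Set.Icc (0 : Fin d → ℝ) 1) :
    (primOp d)^[k] Q x
      = (∫ u, ∏ j, ((x j - u j) ^ k / (Nat.factorial k : ℝ)) *
            (if u j ≤ x j then (1 : ℝ) else 0) ∂ν₁)
        - ∫ u, ∏ j, ((x j - u j) ^ k / (Nat.factorial k : ℝ)) *
            (if u j ≤ x j then (1 : ℝ) else 0) ∂ν₂ := by
  change _ = (∫ u, splineKer d k x u ∂ν₁) - ∫ u, splineKer d k x u ∂ν₂
  clear hk
  induction k generalizing x with
  | zero =>
    rw [Function.iterate_zero_apply, hQ x hx, cdf_eq_mixture d ν₁ hν₁, cdf_eq_mixture d ν₂ hν₂]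
  | succ k ih =>
    rw [Function.iterate_succ_apply', primOp,
      setIntegral_congr_fun measurableSet_Icc fun y hy => ih y ⟨hy.1, hy.2.trans hx.2⟩,
      integral_sub (integrable_splineKer d k ν₁ hν₁ x hx).integral_prod_left
        (integrable_splineKer d k ν₂ hν₂ x hx).integral_prod_left,
      primOp_mixture d k ν₁ hν₁ x hx, primOp_mixture d k ν₂ hν₂ x hx]
end

section
/- (One-dimensional k-th order spline representation.) Let k ≥ 0 be an integer, let c_0, …, c_k ∈ ℝ, and let ν₁, ν₂ be finite Borel measures on ℝ. Define g_k(x) = c_k + ν₁((0, x]) − ν₂((0, x]) for x ∈ [0,1], and recursively g_m(x) = c_m + ∫_0^x g_{m+1}(t) dt for m = k−1, …, 0. Then for every x ∈ [0,1]: g_0(x) = Σ_{m=0}^{k} c_m x^m / m! + ∫_{(0,x]} ((x − u)^k / k!) dν₁(u) − ∫_{(0,x]} ((x − u)^k / k!) dν₂(u). In words: a function whose k-th sequential derivative is a difference of cumulative distribution functions is an (infinite) linear combination of the polynomial splines x^m/m! with knot 0 and the k-th order splines (x−u)^k/k!·1[u ≤ x], with coefficient measure given by the Lebesgue–Stieltjes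 measure of the k-th derivative. -/
open MeasureTheory

/-!
The proof is by induction on `k`, applied to the shifted data `c (· + 1)`, `g (· + 1)`: the formula
for `g 1` is integrated over `[0, x]`. The polynomial part is integrated termwise. For the spline
part, Fubini's theorem on the triangle `0 < u ≤ t ≤ x` gives
`∫_0^x ∫_{(0,t]} (t - u)^n / n! dν(u) dt = ∫_{(0,x]} (x - u)^(n+1) / (n+1)! dν(u)`
(`spline_integral`).
-/

/-- The kernel `(t - u)^n / n! · 1[u ≤ t]` on `[0, x] × (0, x]`: being bounded and measurable, it is
integrable there for the product of Lebesgue measure and a finite measure. -/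
lemma spline_kernel_integrable (ν : Measure ℝ) [IsFiniteMeasure ν] (n : ℕ) (x : ℝ) :
    Integrable (Function.uncurry fun t u : ℝ =>
        (Set.Iic t).indicator (fun u => (t - u) ^ n / (n.factorial : ℝ)) u)
      ((volume.restrict (Set.Icc 0 x)).prod (ν.restrict (Set.Ioc 0 x))) := by
  have hS : MeasurableSet {p : ℝ × ℝ | p.2 ≤ p.1} := measurableSet_le measurable_snd measurable_fst
  have heq : (Function.uncurry fun t u : ℝ =>
        (Set.Iic t).indicator (fun u => (t - u) ^ n / (n.factorial : ℝ)) u)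
      = {p : ℝ × ℝ | p.2 ≤ p.1}.indicator (fun p => (p.1 - p.2) ^ n / (n.factorial : ℝ)) := by
    ext ⟨t, u⟩
    simp [Function.uncurry, Set.indicator_apply]
  rw [heq, Measure.prod_restrict]
  refine Integrable.indicator ?_ hS
  have hfin : (volume.prod ν) (Set.Icc (0 : ℝ) x ×ˢ Set.Ioc (0 : ℝ) x) < ⊤ := by
    rw [Measure.prod_prod]
    exact ENNReal.mul_lt_top (by simp) (measure_lt_top _ _)
  refine IntegrableOn.of_bound hfin (C := |x| ^ n / (n.factorial : ℝ))
    (by fun_prop) ?_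
  refine (ae_restrict_iff' (measurableSet_Icc.prod measurableSet_Ioc)).2 (.of_forall ?_)
  rintro ⟨t, u⟩ ⟨⟨ht0, htx⟩, ⟨hu0, hux⟩⟩
  simp only at ht0 htx hu0 hux
  rw [norm_div, norm_pow, Real.norm_eq_abs, Real.norm_natCast]
  gcongr ?_ ^ n / _
  rw [abs_of_nonneg (ht0.trans htx)]
  exact abs_le.2 ⟨by linarith, by linarith⟩

lemma spline_kernel_inner (ν : Measure ℝ) (n : ℕ) (x t : ℝ) (ht : t ≤ x) :
    ∫ u in Set.Ioc 0 x, (Set.Iic t).indicator (fun u => (t - u) ^ n / (n.factorial : ℝ)) u ∂ν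
      = ∫ u in Set.Ioc 0 t, (t - u) ^ n / (n.factorial : ℝ) ∂ν := by
  rw [setIntegral_indicator measurableSet_Iic, Set.Ioc_inter_Iic, min_eq_right ht]

lemma spline_integrableOn (ν : Measure ℝ) [IsFiniteMeasure ν] (n : ℕ) (x : ℝ) :
    IntegrableOn (fun t => ∫ u in Set.Ioc 0 t, (t - u) ^ n / (n.factorial : ℝ) ∂ν)
      (Set.Icc 0 x) := by
  refine IntegrableOn.congr_fun (spline_kernel_integrable ν n x).integral_prod_left ?_
    measurableSet_Icc
  intro t ht
  exact spline_kernel_inner ν n x t ht.2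

/-- Integrating the `n`-th order spline transform of `ν` yields the `(n+1)`-st one. -/
lemma spline_integral (ν : Measure ℝ) [IsFiniteMeasure ν] (n : ℕ) (x : ℝ) :
    ∫ t in Set.Icc 0 x, ∫ u in Set.Ioc 0 t, (t - u) ^ n / (n.factorial : ℝ) ∂ν
      = ∫ u in Set.Ioc 0 x, (x - u) ^ (n + 1) / ((n + 1).factorial : ℝ) ∂ν := by
  rw [← setIntegral_congr_fun measurableSet_Icc fun t ht => spline_kernel_inner ν n x t ht.2,
    integral_integral_swap (spline_kernel_integrable ν n x)]
  refine setIntegral_congr_fun measurableSet_Ioc fun u hu => ?_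
  have hind : ∀ t : ℝ, (Set.Iic t).indicator (fun u => (t - u) ^ n / (n.factorial : ℝ)) u
      = (Set.Ici u).indicator (fun t => (t - u) ^ n / (n.factorial : ℝ)) t := by
    intro t
    simp [Set.indicator_apply]
  have hset : Set.Icc 0 x ∩ Set.Ici u = Set.Icc u x := by
    ext t
    simp only [Set.mem_inter_iff, Set.mem_Icc, Set.mem_Ici]
    have := hu.1
    grind
  simp only [hind]
  rw [setIntegral_indicator measurableSet_Ici, hset, integral_Icc_eq_integral_Ioc,
    ← intervalIntegral.integral_of_le hu.2, intervalIntegral.integral_div,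
    intervalIntegral.integral_comp_sub_right (fun t => t ^ n), integral_pow, Nat.factorial_succ]
  have : (n.factorial : ℝ) ≠ 0 := by positivity
  push_cast
  field_simp
  simp

lemma monomial_integral (a : ℝ) (m : ℕ) (x : ℝ) (hx : 0 ≤ x) :
    ∫ t in Set.Icc 0 x, a * t ^ m / (m.factorial : ℝ)
      = a * x ^ (m + 1) / ((m + 1).factorial : ℝ) := by
  rw [integral_Icc_eq_integral_Ioc, ← intervalIntegral.integral_of_le hx,
    intervalIntegral.integral_div, intervalIntegral.integral_const_mul, integral_pow,
    Nat.factorial_succ]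
  have : (m.factorial : ℝ) ≠ 0 := by positivity
  push_cast
  field_simp
  simp

/-- One-dimensional `k`-th order spline representation. -/
theorem stmt_3 (k : ℕ) (c : ℕ → ℝ)
    (ν₁ ν₂ : Measure ℝ) [IsFiniteMeasure ν₁] [IsFiniteMeasure ν₂]
    (g : ℕ → ℝ → ℝ)
    (hgk : ∀ x ∈ Set.Icc (0 : ℝ) 1,
      g k x = c k + ((ν₁ (Set.Ioc 0 x)).toReal - (ν₂ (Set.Ioc 0 x)).toReal))
    (hrec : ∀ m < k, ∀ x ∈ Set.Icc (0 : ℝ) 1,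
      g m x = c m + ∫ t in Set.Icc (0 : ℝ) x, g (m + 1) t)
    (x : ℝ) (hx : x ∈ Set.Icc (0 : ℝ) 1) :
    g 0 x = (∑ m ∈ Finset.range (k + 1), c m * x ^ m / (Nat.factorial m : ℝ))
      + ((∫ u in Set.Ioc (0 : ℝ) x, (x - u) ^ k / (Nat.factorial k : ℝ) ∂ν₁)
        - ∫ u in Set.Ioc (0 : ℝ) x, (x - u) ^ k / (Nat.factorial k : ℝ) ∂ν₂) := by
  induction k generalizing c g x with
  | zero => simp [hgk x hx, Measure.real]
  | succ k ih =>
    have h1 := ih (fun m => c (m + 1)) (fun m => g (m + 1)) hgk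
      (fun m hm => hrec (m + 1) (by omega))
    have hpoly : ∀ m ∈ Finset.range (k + 1),
        IntegrableOn (fun t : ℝ => c (m + 1) * t ^ m / (m.factorial : ℝ)) (Set.Icc 0 x) :=
      fun m _ => (Continuous.continuousOn (by fun_prop)).integrableOn_Icc
    have hs₁ := spline_integrableOn ν₁ k x
    have hs₂ := spline_integrableOn ν₂ k x
    rw [hrec 0 (by omega) x hx, setIntegral_congr_fun measurableSet_Icc
      (fun t ht => h1 t ⟨ht.1, ht.2.trans hx.2⟩),
      integral_add (integrable_finsetSum _ hpoly) (by exact hs₁.sub hs₂), integral_sub hs₁ hs₂,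
      integral_finsetSum _ hpoly, spline_integral, spline_integral,
      Finset.sum_congr rfl (fun m _ => monomial_integral (c (m + 1)) m x hx.1),
      Finset.sum_range_succ' _ (k + 1)]
    simp
    ring
end

section
/- (Score covariance identity for the hazard log-likelihood.) Let λ_h : [0, ∞) → [0, ∞) be measurable with Λ(t) = ∫_0^t λ_h(s) ds < ∞ for every t ≥ 0 and Λ(t) → ∞ as t → ∞, so that t ↦ λ_h(t) e^{−Λ(t)} is a probability density on [0, ∞) with respect to Lebesgue measure. Let T be a nonnegative random variable with this density. Then for all bounded measurable φ, h : [0, ∞) → ℝ, E[(φ(T) − ∫_0^T λ_h φ)(h(T) − ∫_0^T λ_h h)] = E[∫_0^T λ_h(s) φ(s) h(s) ds]. -/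
open MeasureTheory Filter

/-!
Write `A`, `B`, `C` for the primitives `∫_0^t lam φ`, `∫_0^t lam h`, `∫_0^t lam φ h`. At almost
every `t > 0`,
`((C - A B) e^{-Λ})' = lam e^{-Λ} ((φ - A)(h - B) - C)`,
so the difference of the two sides of the identity is the total increment on `[0, ∞)` of the
locally absolutely continuous function `(C - A B) e^{-Λ}`. This function vanishes at `0`, and it
tends to `0` at infinity since `|A|`, `|B|`, `|C|` are bounded by multiples of `Λ`.

The expectations may be subtracted because everything is dominated by `lam (1 + Λ)² e^{-Λ}`,
which has the bounded primitive `-(Λ² + 4 Λ + 5) e^{-Λ}`. The facts on primitives are collected in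
`hazard_primitive`, the fundamental theorem of calculus in `ac_ftc`.
-/

theorem ac_lipschitz_comp {f g : ℝ → ℝ} {a b : ℝ} {S : Set ℝ} {K : NNReal}
    (hg : LipschitzOnWith K g S) (hf : AbsolutelyContinuousOnInterval f a b)
    (hS : ∀ t, f t ∈ S) : AbsolutelyContinuousOnInterval (fun t => g (f t)) a b := by
  unfold AbsolutelyContinuousOnInterval at hf ⊢
  refine squeeze_zero (fun t => Finset.sum_nonneg fun i _ => dist_nonneg) (fun t => ?_)
    (by simpa using hf.const_mul (K : ℝ))
  rw [Finset.mul_sum]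
  exact Finset.sum_le_sum fun i _ => hg.dist_le_mul _ (hS _) _ (hS _)

theorem ac_ftc {F F' : ℝ → ℝ} {a b : ℝ} (hF : AbsolutelyContinuousOnInterval F a b)
    (hd : ∀ᵐ x, HasDerivAt F (F' x) x) :
    IntervalIntegrable F' volume a b ∧ ∫ x in a..b, F' x = F b - F a := by
  have h : deriv F =ᵐ[volume] F' := by
    filter_upwards [hd] with x hx using hx.deriv
  constructor
  · exact hF.intervalIntegrable_deriv.congr_ae (ae_restrict_of_ae h)
  · rw [← hF.integral_deriv_eq_sub]
    refine intervalIntegral.integral_congr_ae ?_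
    filter_upwards [h] with x hx _ using hx.symm

theorem lipschitz_exp_neg : LipschitzOnWith 1 (fun x : ℝ => Real.exp (-x)) (Set.Ici 0) := by
  refine Convex.lipschitzOnWith_of_nnnorm_hasDerivWithin_le (f' := fun x => -Real.exp (-x))
    (convex_Ici 0) (fun x _ => ?_) (fun x hx => ?_)
  · have := ((hasDerivAt_id x).neg.exp).hasDerivWithinAt (s := Set.Ici 0)
    simpa using this
  · rw [← NNReal.coe_le_coe]
    have : (0 : ℝ) ≤ x := hx
    simpa using this

/-- The primitive `∫_0^t lam f` of the hazard against a bounded weight. Truncating `lam` to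
`(0, ∞)` makes the derivative formula valid on the whole line, since the primitive vanishes for
`t ≤ 0`. -/
theorem hazard_primitive {lam : ℝ → ℝ} (hlam_nn : ∀ t, 0 ≤ t → 0 ≤ lam t)
    (hlam_int : ∀ t : ℝ, IntegrableOn lam (Set.Ioc (0 : ℝ) t))
    {f : ℝ → ℝ} (hf : Measurable f) {C : ℝ} (hC : ∀ t, |f t| ≤ C) {F : ℝ → ℝ}
    (hF : ∀ t, F t = ∫ s in Set.Ioc (0 : ℝ) t, lam s * f s) :
    Continuous F ∧ (∀ᵐ x, HasDerivAt F ((Set.Ioi (0 : ℝ)).indicator lam x * f x) x) ∧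
      (∀ b, AbsolutelyContinuousOnInterval F 0 b) ∧
      ∀ t, |F t| ≤ C * ∫ s in Set.Ioc (0 : ℝ) t, lam s := by
  set k : ℝ → ℝ := fun x => (Set.Ioi (0 : ℝ)).indicator lam x * f x with hk
  have hkint : ∀ t, IntegrableOn (fun s => lam s * f s) (Set.Ioc (0 : ℝ) t) := fun t =>
    (hlam_int t).mul_bdd (c := C) hf.aestronglyMeasurable (ae_of_all _ hC)
  have hk0 : ∀ t, IntervalIntegrable k volume 0 t := by
    intro t
    rcases le_total 0 t with ht | ht
    · rw [intervalIntegrable_iff_integrableOn_Ioc_of_le ht]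
      refine (hkint t).congr_fun (fun s hs => ?_) measurableSet_Ioc
      simp [hk, Set.indicator_of_mem (show s ∈ Set.Ioi (0:ℝ) from hs.1)]
    · refine IntervalIntegrable.symm ?_
      rw [intervalIntegrable_iff_integrableOn_Ioc_of_le ht]
      refine (integrableOn_zero).congr_fun (fun s hs => ?_) measurableSet_Ioc
      simp [hk, Set.indicator_of_notMem (show s ∉ Set.Ioi (0:ℝ) from not_lt.2 hs.2)]
  have hki : ∀ a b, IntervalIntegrable k volume a b := fun a b => (hk0 a).symm.trans (hk0 b)
  have hFk : F = fun t => ∫ s in (0 : ℝ)..t, k s := by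
    funext t
    rw [hF]
    rcases le_total 0 t with ht | ht
    · rw [intervalIntegral.integral_of_le ht]
      refine setIntegral_congr_fun measurableSet_Ioc (fun s hs => ?_)
      simp [hk, Set.indicator_of_mem (show s ∈ Set.Ioi (0:ℝ) from hs.1)]
    · rw [intervalIntegral.integral_of_ge ht, Set.Ioc_eq_empty (not_lt.2 ht),
        setIntegral_eq_zero_of_forall_eq_zero (f := k) (fun s hs => ?_)]
      · simp
      · simp [hk, Set.indicator_of_notMem (show s ∉ Set.Ioi (0:ℝ) from not_lt.2 hs.2)]
  refine ⟨?_, ?_, ?_, ?_⟩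
  · rw [hFk]
    exact intervalIntegral.continuous_primitive hki 0
  · have hloc : LocallyIntegrable k volume := by
      intro x
      refine ⟨Set.Ioc (x - 1) (x + 1), Ioc_mem_nhds (by linarith) (by linarith), ?_⟩
      rw [← intervalIntegrable_iff_integrableOn_Ioc_of_le (by linarith)]
      exact hki _ _
    filter_upwards [LocallyIntegrable.ae_hasDerivAt_integral hloc] with x hx
    rw [hFk]
    exact hx 0
  · intro b
    rw [hFk]
    exact (hk0 b).absolutelyContinuousOnInterval_intervalIntegral (by simp)
  · intro t
    rw [hF, ← integral_const_mul, ← Real.norm_eq_abs]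
    refine norm_integral_le_of_norm_le ((hlam_int t).const_mul C) ?_
    refine (ae_restrict_iff' measurableSet_Ioc).2 (ae_of_all _ fun s hs => ?_)
    have h0 := hlam_nn s hs.1.le
    rw [norm_mul, Real.norm_of_nonneg h0, mul_comm]
    exact mul_le_mul_of_nonneg_right (hC s) h0

/-- Score covariance identity for the hazard log-likelihood: for a nonnegative random
variable `T` with hazard `lam` and cumulative hazard `Λ` (so density `lam·exp(-Λ)` on
`[0,∞)`), `E[(φ(T) - ∫_0^T lam φ)(h(T) - ∫_0^T lam h)] = E[∫_0^T lam φ h]`. -/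
theorem stmt_14 {Ω : Type*} [MeasurableSpace Ω] (P : Measure Ω) [IsProbabilityMeasure P]
    (T : Ω → ℝ) (hT : Measurable T) (hTnn : ∀ᵐ ω ∂P, 0 ≤ T ω)
    (lam : ℝ → ℝ) (hlam_meas : Measurable lam) (hlam_nn : ∀ t, 0 ≤ t → 0 ≤ lam t)
    (hlam_int : ∀ t : ℝ, IntegrableOn lam (Set.Ioc (0 : ℝ) t))
    (Λ : ℝ → ℝ) (hΛ : ∀ t, Λ t = ∫ s in Set.Ioc (0 : ℝ) t, lam s)
    (hΛtop : Tendsto Λ atTop atTop)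
    (hdens : Measure.map T P = volume.withDensity fun t =>
      ENNReal.ofReal ((Set.Ici (0 : ℝ)).indicator (fun s => lam s * Real.exp (-Λ s)) t))
    (φ h : ℝ → ℝ) (hφm : Measurable φ) (hhm : Measurable h)
    (Cφ Ch : ℝ) (hφb : ∀ t, |φ t| ≤ Cφ) (hhb : ∀ t, |h t| ≤ Ch) :
    ∫ ω, ((φ (T ω) - ∫ s in Set.Ioc (0 : ℝ) (T ω), lam s * φ s)
        * (h (T ω) - ∫ s in Set.Ioc (0 : ℝ) (T ω), lam s * h s)) ∂P
      = ∫ ω, (∫ s in Set.Ioc (0 : ℝ) (T ω), lam s * φ s * h s) ∂P := by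
  have hCφ : 0 ≤ Cφ := (abs_nonneg _).trans (hφb 0)
  have hCh : 0 ≤ Ch := (abs_nonneg _).trans (hhb 0)
  obtain ⟨A, hA⟩ : ∃ A : ℝ → ℝ, ∀ t, A t = ∫ s in Set.Ioc (0 : ℝ) t, lam s * φ s :=
    ⟨_, fun _ => rfl⟩
  obtain ⟨B, hB⟩ : ∃ B : ℝ → ℝ, ∀ t, B t = ∫ s in Set.Ioc (0 : ℝ) t, lam s * h s :=
    ⟨_, fun _ => rfl⟩
  obtain ⟨C, hC⟩ : ∃ C : ℝ → ℝ, ∀ t, C t = ∫ s in Set.Ioc (0 : ℝ) t, lam s * φ s * h s :=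
    ⟨_, fun _ => rfl⟩
  simp only [← hA, ← hB, ← hC]
  obtain ⟨hAc, hAd, hAac, hAb⟩ := hazard_primitive hlam_nn hlam_int hφm hφb hA
  obtain ⟨hBc, hBd, hBac, hBb⟩ := hazard_primitive hlam_nn hlam_int hhm hhb hB
  have hφhb : ∀ t, |φ t * h t| ≤ Cφ * Ch := fun t => by
    rw [abs_mul]; exact mul_le_mul (hφb t) (hhb t) (abs_nonneg _) hCφ
  obtain ⟨hCc, hCd, hCac, hCb⟩ := hazard_primitive hlam_nn hlam_int (hφm.mul hhm) hφhb
    (F := C) (fun t => by simp only [hC, Pi.mul_apply, mul_assoc])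
  obtain ⟨hΛc, hΛd, hΛac, -⟩ := hazard_primitive hlam_nn hlam_int
    (f := fun _ => 1) measurable_const (C := 1) (by simp) (F := Λ) (fun t => by simp [hΛ])
  simp only [← hΛ] at hAb hBb hCb
  have hΛ0 : ∀ t, 0 ≤ Λ t := fun t => by
    rw [hΛ]; exact setIntegral_nonneg measurableSet_Ioc fun s hs => hlam_nn s hs.1.le
  set l : ℝ → ℝ := (Set.Ioi (0 : ℝ)).indicator lam with hl
  have hl0 : ∀ t, 0 ≤ l t := fun t => Set.indicator_nonneg (fun s hs => hlam_nn s (le_of_lt hs)) t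
  have hlm : Measurable l := hlam_meas.indicator measurableSet_Ioi
  have hEac : ∀ b, AbsolutelyContinuousOnInterval (fun t => Real.exp (-Λ t)) 0 b := fun b =>
    ac_lipschitz_comp (g := fun x => Real.exp (-x)) lipschitz_exp_neg (hΛac b) hΛ0
  have hEd : ∀ᵐ x, HasDerivAt (fun t => Real.exp (-Λ t)) (-(l x * Real.exp (-Λ x))) x := by
    filter_upwards [hΛd] with x hx
    convert! hx.neg.exp using 1
    simp only [Pi.neg_apply]
    ring
  set d : ℝ → ℝ := fun t => l t * Real.exp (-Λ t) with hd
  have hdm : Measurable d := hlm.mul (hΛc.measurable.neg.exp)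
  have hd0 : ∀ t, 0 ≤ d t := fun t => mul_nonneg (hl0 t) (Real.exp_pos _).le
  have hdout : ∀ t, t ∉ Set.Ioi (0 : ℝ) → d t = 0 := fun t ht => by simp [hd, hl, ht]
  have hmap : Measure.map T P = volume.withDensity fun t => ENNReal.ofReal (d t) := by
    rw [hdens]
    refine withDensity_congr_ae ?_
    filter_upwards [Measure.ae_ne volume (0 : ℝ)] with t ht
    congr 1
    rcases lt_or_gt_of_ne ht with h0 | h0
    · simp [hd, hl, h0.le, h0]
    · simp [hd, hl, h0.le, h0]
  have hdtop : ∀ᵐ t : ℝ, ENNReal.ofReal (d t) < ⊤ := ae_of_all _ fun _ => ENNReal.ofReal_lt_top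
  have hdomI : Integrable (fun t => d t * (1 + Λ t) ^ 2) := by
    have key : ∀ b, IntervalIntegrable (fun t => d t * (1 + Λ t) ^ 2) volume 0 b ∧
        ∫ t in (0 : ℝ)..b, d t * (1 + Λ t) ^ 2
          = -((Λ b * Λ b + 4 * Λ b) * Real.exp (-Λ b) + 5 * Real.exp (-Λ b))
            - -((Λ 0 * Λ 0 + 4 * Λ 0) * Real.exp (-Λ 0) + 5 * Real.exp (-Λ 0)) := by
      intro b
      refine ac_ftc (F := fun b =>
        -((Λ b * Λ b + 4 * Λ b) * Real.exp (-Λ b) + 5 * Real.exp (-Λ b))) ?_ ?_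
      · exact (((((hΛac b).fun_mul (hΛac b)).fun_add ((hΛac b).const_mul 4)).fun_mul
          (hEac b)).fun_add ((hEac b).const_mul 5)).fun_neg
      · filter_upwards [hΛd, hEd] with x h1 h2
        convert! ((((h1.mul h1).add (h1.const_mul 4)).mul h2).add (h2.const_mul 5)).neg using 1
        simp only [hd, Pi.add_apply, Pi.mul_apply]
        ring
    have : IntegrableOn (fun t => d t * (1 + Λ t) ^ 2) (Set.Ioi 0) := by
      refine integrableOn_Ioi_of_intervalIntegral_norm_bounded (b := fun b : ℝ => b) (l := atTop)
        5 0 (fun b => ?_) tendsto_id (Eventually.of_forall fun b => ?_)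
      · rcases le_total 0 b with hb | hb
        · exact (intervalIntegrable_iff_integrableOn_Ioc_of_le hb).1 (key b).1
        · simp [Set.Ioc_eq_empty (not_lt.2 hb)]
      · have hn : ∀ t, ‖d t * (1 + Λ t) ^ 2‖ = d t * (1 + Λ t) ^ 2 := fun t =>
          Real.norm_of_nonneg (mul_nonneg (hd0 t) (sq_nonneg _))
        have h00 : Λ 0 = 0 := by simp [hΛ]
        simp only [hn]
        rw [(key b).2, h00]
        have := hΛ0 b
        have : 0 ≤ (Λ b * Λ b + 4 * Λ b) * Real.exp (-Λ b) + 5 * Real.exp (-Λ b) := by positivity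
        simp only [neg_zero, Real.exp_zero]
        linarith
    rw [integrableOn_iff_integrable_of_support_subset] at this
    · exact this
    · intro t ht
      by_contra hc
      exact ht (by simp [hdout t hc])
  have hint : ∀ {g : ℝ → ℝ} {K : ℝ}, Measurable g → (∀ t, |g t| ≤ K * (1 + Λ t) ^ 2) →
      Integrable (fun t => d t * g t) := by
    intro g K hg hb
    refine (hdomI.const_mul K).mono' (hdm.mul hg).aestronglyMeasurable (ae_of_all _ fun t => ?_)
    rw [norm_mul, Real.norm_of_nonneg (hd0 t), Real.norm_eq_abs]
    nlinarith [mul_le_mul_of_nonneg_left (hb t) (hd0 t)]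
  have hXm : Measurable fun t => (φ t - A t) * (h t - B t) :=
    (hφm.sub hAc.measurable).mul (hhm.sub hBc.measurable)
  have hXint : Integrable (fun t => d t * ((φ t - A t) * (h t - B t))) := by
    refine hint (K := Cφ * Ch) hXm fun t => ?_
    have h1 : |φ t - A t| ≤ Cφ * (1 + Λ t) := by
      linarith [abs_sub (φ t) (A t), hφb t, hAb t]
    have h2 : |h t - B t| ≤ Ch * (1 + Λ t) := by
      linarith [abs_sub (h t) (B t), hhb t, hBb t]
    rw [abs_mul]
    calc _ ≤ (Cφ * (1 + Λ t)) * (Ch * (1 + Λ t)) :=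
          mul_le_mul h1 h2 (abs_nonneg _) ((abs_nonneg _).trans h1)
      _ = _ := by ring
  have hCint : Integrable (fun t => d t * C t) := by
    refine hint (K := Cφ * Ch) hCc.measurable fun t => (hCb t).trans ?_
    refine mul_le_mul_of_nonneg_left ?_ (mul_nonneg hCφ hCh)
    nlinarith [hΛ0 t, sq_nonneg (Λ t)]
  have hexp : ∀ {g : ℝ → ℝ}, Measurable g → ∫ ω, g (T ω) ∂P = ∫ t, d t * g t := by
    intro g hg
    rw [← integral_map hT.aemeasurable hg.aestronglyMeasurable, hmap,
      integral_withDensity_eq_integral_toReal_smul hdm.ennreal_ofReal hdtop]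
    simp only [ENNReal.toReal_ofReal (hd0 _), smul_eq_mul]
  rw [hexp hXm, hexp hCc.measurable, ← sub_eq_zero, ← integral_sub hXint hCint]
  have hI := hXint.sub hCint
  set G : ℝ → ℝ := fun t => d t * ((φ t - A t) * (h t - B t)) - d t * C t with hG
  rw [← setIntegral_eq_integral_of_forall_compl_eq_zero (s := Set.Ioi 0)
    (fun t ht => by simp [hdout t ht])]
  have hlim := intervalIntegral_tendsto_integral_Ioi (f := G) (μ := volume) 0 hI.integrableOn
    tendsto_id
  refine tendsto_nhds_unique hlim ?_
  have hval : ∀ b, ∫ t in (0 : ℝ)..b, G t = (C b - A b * B b) * Real.exp (-Λ b) := by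
    intro b
    rw [(ac_ftc (F := fun b => (C b - A b * B b) * Real.exp (-Λ b)) (F' := G)
      (((hCac b).fun_sub ((hAac b).fun_mul (hBac b))).fun_mul (hEac b)) ?_).2]
    · simp [hA, hC]
    · filter_upwards [hAd, hBd, hCd, hEd] with x h1 h2 h3 h4
      convert! (h3.sub (h1.mul h2)).mul h4 using 1
      simp only [hG, hd, Pi.sub_apply, Pi.mul_apply]
      ring
  simp only [id, hval]
  have hp1 := (Real.tendsto_pow_mul_exp_neg_atTop_nhds_zero 1).comp hΛtop
  have hp2 := (Real.tendsto_pow_mul_exp_neg_atTop_nhds_zero 2).comp hΛtop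
  refine squeeze_zero_norm (fun b => ?_)
    (by simpa using (hp1.add hp2).const_mul (Cφ * Ch))
  rw [norm_mul, Real.norm_of_nonneg (Real.exp_pos _).le, Real.norm_eq_abs]
  have h1 : |C b - A b * B b| ≤ Cφ * Ch * (Λ b + Λ b ^ 2) := by
    have h2 : |A b * B b| ≤ (Cφ * Λ b) * (Ch * Λ b) := by
      rw [abs_mul]
      exact mul_le_mul (hAb b) (hBb b) (abs_nonneg _) ((abs_nonneg _).trans (hAb b))
    nlinarith [abs_sub (C b) (A b * B b), hCb b]
  refine (mul_le_mul_of_nonneg_right h1 (Real.exp_pos _).le).trans (le_of_eq ?_)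
  ring
end
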